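/- Let c be a positive integer and μ, ν, μ', ν' ∈ ℝ. If (μ,ν) and (μ',ν') lie in the same orbit of the natural action of GL(2,ℤ) on the torus T² = ℝ²/ℤ², then the quantum Heisenberg manifolds D^c_{μν} and D^c_{μ'ν'} are isomorphic as C*-algebras. -/

import Mathlib

noncomputable section

/-- A (pre-)Hilbert C*-bimodule over a C*-algebra `A` (in the sense of
Brown–Mingo–Shen): an `A`-`A`-bimodule with left and right `A`-valued inner
products making it a left and right (pre-)Hilbert C*-module, subject to the
compatibility condition `⟨m,n⟩_L • p = m • ⟨n,p⟩_R`.  The module actions and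
inner products are bundled as plain functions. -/
structure CstarBimodule (A M : Type*)
    [NormedRing A] [StarRing A] [CStarRing A] [NormedAlgebra ℂ A] [StarModule ℂ A]
    [AddCommGroup M] [Module ℂ M] : Type _ where
  lsmul : A → M → M
  rsmul : M → A → M
  innerL : M → M → A
  innerR : M → M → A
  lsmul_add : ∀ a (m n : M), lsmul a (m + n) = lsmul a m + lsmul a n
  add_lsmul : ∀ a b (m : M), lsmul (a + b) m = lsmul a m + lsmul b m
  mul_lsmul : ∀ a b (m : M), lsmul (a * b) m = lsmul a (lsmul b m)
  lsmul_smulc : ∀ (c : ℂ) a (m : M), lsmul (c • a) m = c • lsmul a m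
  rsmul_add : ∀ (m n : M) a, rsmul (m + n) a = rsmul m a + rsmul n a
  add_rsmul : ∀ (m : M) a b, rsmul m (a + b) = rsmul m a + rsmul m b
  rsmul_mul : ∀ (m : M) a b, rsmul m (a * b) = rsmul (rsmul m a) b
  rsmul_smulc : ∀ (c : ℂ) (m : M) a, rsmul m (c • a) = c • rsmul m a
  lsmul_rsmul : ∀ a (m : M) b, rsmul (lsmul a m) b = lsmul a (rsmul m b)
  innerL_add_left : ∀ m n p : M, innerL (m + n) p = innerL m p + innerL n p
  innerL_smul_left : ∀ (c : ℂ) (m n : M), innerL (c • m) n = c • innerL m n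
  innerL_lsmul_left : ∀ a (m n : M), innerL (lsmul a m) n = a * innerL m n
  innerL_star : ∀ m n : M, star (innerL m n) = innerL n m
  innerL_nonneg : ∀ m : M, ∃ b, innerL m m = star b * b
  innerL_definite : ∀ m : M, innerL m m = 0 → m = 0
  innerR_add_right : ∀ m n p : M, innerR m (n + p) = innerR m n + innerR m p
  innerR_smul_right : ∀ (c : ℂ) (m n : M), innerR m (c • n) = c • innerR m n
  innerR_rsmul_right : ∀ (m n : M) a, innerR m (rsmul n a) = innerR m n * a
  innerR_star : ∀ m n : M, star (innerR m n) = innerR n m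
  innerR_nonneg : ∀ m : M, ∃ b, innerR m m = star b * b
  innerR_definite : ∀ m : M, innerR m m = 0 → m = 0
  compat : ∀ m n p : M, lsmul (innerL m n) p = rsmul m (innerR n p)

variable {A M N : Type*}
  [NormedRing A] [StarRing A] [CStarRing A] [NormedAlgebra ℂ A] [StarModule ℂ A]
  [AddCommGroup M] [Module ℂ M] [AddCommGroup N] [Module ℂ N]

/-- `Φ : M → N` is an isomorphism of left Hilbert `A`-modules: a bijective
`A`-linear additive map preserving the left `A`-valued inner products. -/
def IsLeftHilbertIso (S : CstarBimodule A M) (T : CstarBimodule A N) (Φ : M → N) : Prop :=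
  Function.Bijective Φ ∧ (∀ m n : M, Φ (m + n) = Φ m + Φ n) ∧
    (∀ a (m : M), Φ (S.lsmul a m) = T.lsmul a (Φ m)) ∧
    (∀ m n : M, T.innerL (Φ m) (Φ n) = S.innerL m n)

/-- An isomorphism of Hilbert C*-bimodules: additionally preserves the right
action and the right inner product. -/
def IsBimoduleIso (S : CstarBimodule A M) (T : CstarBimodule A N) (Φ : M → N) : Prop :=
  IsLeftHilbertIso S T Φ ∧ (∀ (m : M) a, Φ (S.rsmul m a) = T.rsmul (Φ m) a) ∧
    (∀ m n : M, T.innerR (Φ m) (Φ n) = S.innerR m n)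

variable (S : CstarBimodule A M)

/-- A covariant representation of the Hilbert C*-bimodule `M` over `A` in a
C*-algebra `B` (the relations defining the crossed product `A ⋊_M ℤ`). -/
structure CovariantRep (B : Type*) [NormedRing B] [StarRing B] [CStarRing B]
    [NormedAlgebra ℂ B] [StarModule ℂ B] where
  ρ : A →⋆ₙₐ[ℂ] B
  ψ : M → B
  ψ_add : ∀ m n : M, ψ (m + n) = ψ m + ψ n
  ψ_smul : ∀ (c : ℂ) (m : M), ψ (c • m) = c • ψ m
  cov_lsmul : ∀ a (m : M), ψ (S.lsmul a m) = ρ a * ψ m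
  cov_rsmul : ∀ (m : M) a, ψ (S.rsmul m a) = ψ m * ρ a
  cov_innerL : ∀ m n : M, ψ m * star (ψ n) = ρ (S.innerL m n)
  cov_innerR : ∀ m n : M, star (ψ m) * ψ n = ρ (S.innerR m n)

/-- `B`, together with the covariant representation `r`, is the crossed
product `A ⋊_M ℤ`: the images of `A` and `M` generate `B` as a closed
*-subalgebra, and `(B, r)` is universal among covariant representations. -/
def IsCrossedProduct (B : Type*) [NormedRing B] [StarRing B] [CStarRing B]
    [NormedAlgebra ℂ B] [StarModule ℂ B] [CompleteSpace B]
    (r : CovariantRep S B) : Prop :=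
  (∀ C : NonUnitalStarSubalgebra ℂ B, IsClosed (C : Set B) →
      Set.range r.ρ ⊆ C → Set.range r.ψ ⊆ C → C = ⊤) ∧
  ∀ (C : Type*) [NormedRing C] [StarRing C] [CStarRing C] [NormedAlgebra ℂ C]
      [StarModule ℂ C] [CompleteSpace C] (r' : CovariantRep S C),
    ∃! φ : B →⋆ₙₐ[ℂ] C,
      (∀ a : A, φ (r.ρ a) = r'.ρ a) ∧ ∀ m : M, φ (r.ψ m) = r'.ψ m

/-- `e(-c(y-ν))` for `y ∈ T = ℝ/ℤ` (well defined since `c ∈ ℤ`). -/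
def eChar (c : ℤ) (ν : ℝ) (y : UnitAddCircle) : ℂ :=
  ((AddCircle.toCircle (y - (ν : UnitAddCircle))) ^ (-c) : Circle)

/-- The space `X^c_ν` of continuous functions on `ℝ × T` with
`f(x+1,y) = e(-c(y-ν)) f(x,y)`, as a `ℂ`-submodule of `C(ℝ × T, ℂ)`. -/
def Xcv (c : ℤ) (ν : ℝ) : Submodule ℂ C(ℝ × UnitAddCircle, ℂ) where
  carrier := {f | ∀ (x : ℝ) (y : UnitAddCircle), f (x + 1, y) = eChar c ν y * f (x, y)}
  add_mem' := by
    intro f g hf hg x y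
    simp only [ContinuousMap.add_apply, hf x y, hg x y, mul_add]
  zero_mem' := by
    intro x y
    simp
  smul_mem' := by
    intro a f hf x y
    simp only [ContinuousMap.coe_smul, Pi.smul_apply, hf x y, smul_eq_mul]
    ring

/-- The function algebra `C(T²)`. -/
abbrev CT2 := C(UnitAddCircle × UnitAddCircle, ℂ)

/-- The Hilbert C*-bimodule `(X^c_ν)_{α_{μν}} = X^c_ν ⊗ C(T²)_{α_{μν}}` over
`C(T²)` whose crossed product by `ℤ` is the quantum Heisenberg manifold
`D^c_{μν}`: left action and left inner product are pointwise, while the right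
action and right inner product are twisted by the translation automorphism
`α_{μν}(x,y) = (x+2μ, y+2ν)`. -/
def IsHeisenbergBimodule (c : ℤ) (μ ν : ℝ)
    (S : CstarBimodule CT2 (Xcv c ν)) : Prop :=
  (∀ (a : CT2) (f : Xcv c ν) (x : ℝ) (y : UnitAddCircle),
    (S.lsmul a f : C(ℝ × UnitAddCircle, ℂ)) (x, y) =
      a ((x : UnitAddCircle), y) * (f : C(ℝ × UnitAddCircle, ℂ)) (x, y)) ∧
  (∀ (f : Xcv c ν) (a : CT2) (x : ℝ) (y : UnitAddCircle),
    (S.rsmul f a : C(ℝ × UnitAddCircle, ℂ)) (x, y) =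
      (f : C(ℝ × UnitAddCircle, ℂ)) (x, y) *
        a ((x : UnitAddCircle) + ((2 * μ : ℝ) : UnitAddCircle),
           y + ((2 * ν : ℝ) : UnitAddCircle))) ∧
  (∀ (f g : Xcv c ν) (x : ℝ) (y : UnitAddCircle),
    (S.innerL f g) ((x : UnitAddCircle), y) =
      (f : C(ℝ × UnitAddCircle, ℂ)) (x, y) *
        star ((g : C(ℝ × UnitAddCircle, ℂ)) (x, y))) ∧
  (∀ (f g : Xcv c ν) (x : ℝ) (y : UnitAddCircle),
    (S.innerR f g) ((x : UnitAddCircle) + ((2 * μ : ℝ) : UnitAddCircle),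
        y + ((2 * ν : ℝ) : UnitAddCircle)) =
      star ((f : C(ℝ × UnitAddCircle, ℂ)) (x, y)) *
        (g : C(ℝ × UnitAddCircle, ℂ)) (x, y))

/-!
An isomorphism of Hilbert C*-bimodules covering an automorphism of the coefficient algebra carries
covariant representations to covariant representations, hence identifies the crossed products. The
same holds for an isomorphism onto the dual bimodule, when `ψ` is replaced by `star ∘ ψ`.

Lifted to the plane, `X^c_ν` consists of the functions that are quasiperiodic under `ℤ²` with a
multiplier of degree `c`. Pulling back along `g ∈ GL(2,ℤ)` multiplies the degree by `det g`, and the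
degree determines a multiplier up to a gauge transformation, so that neither the offset `ν` nor an
additional translation matters. If `det g = 1`, the pullback along `g` is therefore an isomorphism
of bimodules after a phase correction, since `g` intertwines the translations by `(2μ, 2ν)` and
`(2μ', 2ν')`. If `det g = -1`, following the pullback by complex conjugation restores the degree and
gives an isomorphism onto the dual bimodule; there the translation is inverted, so `-g` takes the
place of `g`.

The universal properties of the two crossed products may quantify over algebras in different
universes. This does no harm: a crossed product is the closure of an algebra generated by a small
set, hence small, and its C*-structure can be moved to any universe.
-/

section Smallness

universe u w

theorem small_of_dense {X : Type*} [TopologicalSpace X] [FrechetUrysohnSpace X] [T2Space X]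
    {s : Set X} [Small.{w} s] (hs : Dense s) : Small.{w} X := by
  rcases isEmpty_or_nonempty X with _ | _
  · infer_instance
  refine small_of_surjective (α := ℕ → s)
    (f := fun u => Filter.atTop.limUnder fun n => (u n : X)) fun x => ?_
  obtain ⟨u, hus, hux⟩ := mem_closure_iff_seq_limit.1 (hs x)
  exact ⟨fun n => ⟨u n, hus n⟩, hux.limUnder_eq⟩

theorem small_algebraAdjoin {R : Type u} {E : Type*} [CommSemiring R] [Semiring E] [Algebra R E]
    (s : Set E) [Small.{w} s] : Small.{max u w} (Algebra.adjoin R s) := by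
  let generators : Shrink.{w} s → E := fun i => ((equivShrink s).symm i : E)
  have range_generators : Set.range generators = s :=
    ((equivShrink s).symm.surjective.range_comp _).trans Subtype.range_coe
  have : Small.{max u w} (Set.range (FreeAlgebra.lift R generators)) := small_range _
  rwa [← AlgHom.coe_range, ← Algebra.adjoin_range_eq_range_freeAlgebra_lift,
    range_generators] at this

theorem small_starAlgebraAdjoin {R : Type u} {E : Type*} [CommSemiring R] [StarRing R] [Semiring E]
    [StarRing E] [Algebra R E] [StarModule R E] (s : Set E) [Small.{w} s] :
    Small.{max u w} (StarAlgebra.adjoin R s) := by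
  have : Small.{w} (star s : Set E) := by
    rw [← Set.image_star]
    infer_instance
  exact small_algebraAdjoin.{u, w} (s ∪ star s)

variable {B : Type*} [NormedRing B] [NormedAlgebra ℂ B] [Small.{w} B]

instance : NormedRing (Shrink.{w} B) := (equivShrink B).symm.normedRing

instance : NormedAlgebra ℂ (Shrink.{w} B) where
  norm_smul_le := norm_smul_le

instance [CompleteSpace B] : CompleteSpace (Shrink.{w} B) :=
  (IsometryEquiv.mk (equivShrink B).symm fun _ _ => rfl).completeSpace

variable [StarRing B]

instance : StarRing (Shrink.{w} B) where
  star x := equivShrink B (star ((equivShrink B).symm x))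
  star_involutive x := by simp
  star_mul x y := by simp [equivShrink_symm_mul, equivShrink_mul]
  star_add x y := by simp

instance [CStarRing B] : CStarRing (Shrink.{w} B) where
  norm_mul_self_le x := by
    change _ ≤ ‖(equivShrink B).symm (equivShrink B (star ((equivShrink B).symm x)) * x)‖
    rw [equivShrink_symm_mul, Equiv.symm_apply_apply]
    exact CStarRing.norm_mul_self_le ((equivShrink B).symm x)

instance [StarModule ℂ B] : StarModule ℂ (Shrink.{w} B) where
  star_smul k x := by
    change equivShrink B (star ((equivShrink B).symm (k • x))) =
      star k • equivShrink B (star ((equivShrink B).symm x))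
    rw [equivShrink_symm_smul, star_smul, equivShrink_smul]

/-- The C*-structure of `Shrink B` is the one transported from `B`, so the two are isomorphic. -/
def shrinkStarAlgEquiv : Shrink.{w} B ≃⋆ₐ[ℂ] B :=
  .ofAlgEquiv (Shrink.algEquiv ℂ B) fun _ => (equivShrink B).symm_apply_apply _

end Smallness

section CrossedProduct

universe w w'

variable {S}
  {B : Type*} [NormedRing B] [StarRing B] [CStarRing B] [NormedAlgebra ℂ B] [StarModule ℂ B]
  {C : Type*} [NormedRing C] [StarRing C] [CStarRing C] [NormedAlgebra ℂ C] [StarModule ℂ C]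

namespace CovariantRep

/-- The image of a covariant representation under a *-homomorphism. -/
def map (r : CovariantRep S B) (φ : B →⋆ₙₐ[ℂ] C) : CovariantRep S C where
  ρ := φ.comp r.ρ
  ψ m := φ (r.ψ m)
  ψ_add m n := by rw [r.ψ_add, map_add]
  ψ_smul k m := by rw [r.ψ_smul, map_smul]
  cov_lsmul a m := by rw [r.cov_lsmul, map_mul]; rfl
  cov_rsmul m a := by rw [r.cov_rsmul, map_mul]; rfl
  cov_innerL m n := by rw [← map_star, ← map_mul, r.cov_innerL]; rfl
  cov_innerR m n := by rw [← map_star, ← map_mul, r.cov_innerR]; rfl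

end CovariantRep

namespace IsCrossedProduct

variable [CompleteSpace B] [CompleteSpace C] {r : CovariantRep S B} {s : CovariantRep S C}

theorem small [Small.{w} A] [Small.{w} M] (hB : IsCrossedProduct S B r) : Small.{w} B := by
  let D := StarAlgebra.adjoin ℂ (Set.range r.ρ ∪ Set.range r.ψ)
  have generators_subset : Set.range r.ρ ∪ Set.range r.ψ ⊆ (D.topologicalClosure : Set B) :=
    (StarAlgebra.subset_adjoin ℂ _).trans D.le_topologicalClosure
  have topologicalClosure_eq_top := hB.1 D.topologicalClosure.toNonUnitalStarSubalgebra
    D.isClosed_topologicalClosure (Set.subset_union_left.trans generators_subset)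
    (Set.subset_union_right.trans generators_subset)
  have dense : Dense (D : Set B) :=
    dense_iff_closure_eq.2 (congrArg SetLike.coe topologicalClosure_eq_top)
  have : Small.{w} (D : Set B) := small_starAlgebraAdjoin _
  exact small_of_dense dense

theorem eq_id (hB : IsCrossedProduct S B r) {φ : B →⋆ₙₐ[ℂ] B}
    (hρ : ∀ a, φ (r.ρ a) = r.ρ a) (hψ : ∀ m, φ (r.ψ m) = r.ψ m) :
    φ = NonUnitalStarAlgHom.id ℂ B := by
  let : CStarAlgebra B := {}
  have hφ : Continuous φ :=
    (NonUnitalStarAlgHom.instContinuousLinearMapClassComplex (F := B →⋆ₙₐ[ℂ] B)).map_continuous φ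
  have equalizer_eq_top := hB.1 (NonUnitalStarAlgHom.equalizer φ (.id ℂ B))
    (isClosed_eq hφ continuous_id) (Set.range_subset_iff.2 hρ) (Set.range_subset_iff.2 hψ)
  ext b
  exact NonUnitalStarAlgHom.mem_equalizer φ (.id ℂ B) b |>.1
    (equalizer_eq_top ▸ NonUnitalStarAlgebra.mem_top)

theorem exists_hom (hB : IsCrossedProduct.{_, _, _, w} S B r) [Small.{w} C]
    (s : CovariantRep S C) :
    ∃ φ : B →⋆ₙₐ[ℂ] C, (∀ a, φ (r.ρ a) = s.ρ a) ∧ ∀ m, φ (r.ψ m) = s.ψ m := by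
  let e := shrinkStarAlgEquiv.{w} (B := C)
  obtain ⟨φ, ⟨hρ, hψ⟩, -⟩ := hB.2 (Shrink.{w} C) (s.map (e.symm : C →⋆ₙₐ[ℂ] Shrink.{w} C))
  refine ⟨(e : Shrink.{w} C →⋆ₙₐ[ℂ] C).comp φ, fun a => ?_, fun m => ?_⟩
  · exact (congrArg e (hρ a)).trans (e.apply_symm_apply _)
  · exact (congrArg e (hψ m)).trans (e.apply_symm_apply _)

theorem nonempty_starAlgEquiv (hB : IsCrossedProduct.{_, _, _, w} S B r)
    (hC : IsCrossedProduct.{_, _, _, w'} S C s) [Small.{w} A] [Small.{w} M] [Small.{w'} A]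
    [Small.{w'} M] : Nonempty (B ≃⋆ₐ[ℂ] C) := by
  have : Small.{w'} B := IsCrossedProduct.small.{w'} hB
  have : Small.{w} C := IsCrossedProduct.small.{w} hC
  obtain ⟨φ, hφρ, hφψ⟩ := hB.exists_hom s
  obtain ⟨φ', hφ'ρ, hφ'ψ⟩ := hC.exists_hom r
  have left_inv : φ'.comp φ = .id ℂ B := hB.eq_id
    (fun a => (congrArg φ' (hφρ a)).trans (hφ'ρ a)) fun m => (congrArg φ' (hφψ m)).trans (hφ'ψ m)
  have right_inv : φ.comp φ' = .id ℂ C := hC.eq_id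
    (fun a => (congrArg φ (hφ'ρ a)).trans (hφρ a)) fun m => (congrArg φ (hφ'ψ m)).trans (hφψ m)
  exact ⟨.ofBijective φ
    ⟨Function.LeftInverse.injective (DFunLike.congr_fun left_inv),
      Function.RightInverse.surjective (DFunLike.congr_fun right_inv)⟩⟩

end IsCrossedProduct

section Transfer

variable {A' : Type*} [NormedRing A'] [StarRing A'] [CStarRing A'] [NormedAlgebra ℂ A']
  [StarModule ℂ A'] {T : CstarBimodule A' N}

/-- `Φ` is an isomorphism of Hilbert C*-bimodules from `T` to `S`, covering the isomorphism `σ` of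
their coefficient algebras. -/
structure IsIsoOver (S : CstarBimodule A M) (T : CstarBimodule A' N) (σ : A' ≃⋆ₐ[ℂ] A)
    (Φ : N ≃ₗ[ℂ] M) : Prop where
  map_lsmul : ∀ a m, Φ (T.lsmul a m) = S.lsmul (σ a) (Φ m)
  map_rsmul : ∀ m a, Φ (T.rsmul m a) = S.rsmul (Φ m) (σ a)
  map_innerL : ∀ m n, S.innerL (Φ m) (Φ n) = σ (T.innerL m n)
  map_innerR : ∀ m n, S.innerR (Φ m) (Φ n) = σ (T.innerR m n)

/-- `Φ` is an isomorphism of Hilbert C*-bimodules from `T` to the dual of `S`, covering `σ`. The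
dual of `S` is the conjugate vector space of `S` with the two sides exchanged; instead of forming
it, `Φ` is taken to be conjugate-linear with values in `S`. -/
structure IsAntiIsoOver (S : CstarBimodule A M) (T : CstarBimodule A' N) (σ : A' ≃⋆ₐ[ℂ] A)
    (Φ : N ≃ₗ⋆[ℂ] M) : Prop where
  map_lsmul : ∀ a m, Φ (T.lsmul a m) = S.rsmul (Φ m) (star (σ a))
  map_rsmul : ∀ m a, Φ (T.rsmul m a) = S.lsmul (star (σ a)) (Φ m)
  map_innerL : ∀ m n, S.innerR (Φ m) (Φ n) = σ (T.innerL m n)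
  map_innerR : ∀ m n, S.innerL (Φ m) (Φ n) = σ (T.innerR m n)

section Iso

variable {σ : A' ≃⋆ₐ[ℂ] A} {Φ : N ≃ₗ[ℂ] M}

theorem IsIsoOver.symm (h : IsIsoOver S T σ Φ) : IsIsoOver T S σ.symm Φ.symm where
  map_lsmul a m := by simp [LinearEquiv.symm_apply_eq, h.map_lsmul]
  map_rsmul m a := by simp [LinearEquiv.symm_apply_eq, h.map_rsmul]
  map_innerL m n := by rw [← σ.symm_apply_apply (T.innerL _ _), ← h.map_innerL]; simp
  map_innerR m n := by rw [← σ.symm_apply_apply (T.innerR _ _), ← h.map_innerR]; simp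

/-- The pullback of a covariant representation along an isomorphism of bimodules. -/
def CovariantRep.comap (r : CovariantRep S B) (h : IsIsoOver S T σ Φ) : CovariantRep T B where
  ρ := r.ρ.comp (σ : A' →⋆ₙₐ[ℂ] A)
  ψ m := r.ψ (Φ m)
  ψ_add m n := by rw [map_add, r.ψ_add]
  ψ_smul k m := by rw [map_smul, r.ψ_smul]
  cov_lsmul a m := by rw [h.map_lsmul, r.cov_lsmul]; rfl
  cov_rsmul m a := by rw [h.map_rsmul, r.cov_rsmul]; rfl
  cov_innerL m n := by rw [r.cov_innerL, h.map_innerL]; rfl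
  cov_innerR m n := by rw [r.cov_innerR, h.map_innerR]; rfl

theorem IsCrossedProduct.comap [CompleteSpace B] {r : CovariantRep S B}
    (hB : IsCrossedProduct.{_, _, _, w} S B r) (h : IsIsoOver S T σ Φ) :
    IsCrossedProduct.{_, _, _, w} T B (r.comap h) := by
  refine ⟨fun D hD hρ hψ => hB.1 D hD ?_ ?_, fun C _ _ _ _ _ _ t => ?_⟩
  · exact (σ.surjective.range_comp r.ρ).symm.trans_subset hρ
  · exact (Φ.surjective.range_comp r.ψ).symm.trans_subset hψ
  · refine (existsUnique_congr fun φ => and_congr ?_ ?_).1 (hB.2 C (t.comap h.symm))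
    · exact (EquivLike.surjective σ).forall.trans (by simp [CovariantRep.comap])
    · exact Φ.surjective.forall.trans (by simp [CovariantRep.comap])

end Iso

section AntiIso

variable {σ : A' ≃⋆ₐ[ℂ] A} {Φ : N ≃ₗ⋆[ℂ] M}

theorem IsAntiIsoOver.symm (h : IsAntiIsoOver S T σ Φ) :
    IsAntiIsoOver T S σ.symm Φ.symm where
  map_lsmul a m := by simp [LinearEquiv.symm_apply_eq, h.map_rsmul, map_star]
  map_rsmul m a := by simp [LinearEquiv.symm_apply_eq, h.map_lsmul, map_star]
  map_innerL m n := by rw [← σ.symm_apply_apply (T.innerR _ _), ← h.map_innerR]; simp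
  map_innerR m n := by rw [← σ.symm_apply_apply (T.innerL _ _), ← h.map_innerL]; simp

/-- The pullback of a covariant representation along an isomorphism onto the dual bimodule. -/
def CovariantRep.anticomap (r : CovariantRep S B) (h : IsAntiIsoOver S T σ Φ) :
    CovariantRep T B where
  ρ := r.ρ.comp (σ : A' →⋆ₙₐ[ℂ] A)
  ψ m := star (r.ψ (Φ m))
  ψ_add m n := by rw [map_add, r.ψ_add, star_add]
  ψ_smul k m := by rw [map_smulₛₗ, r.ψ_smul, star_smul, starRingEnd_apply, star_star]
  cov_lsmul a m := by rw [h.map_lsmul, r.cov_rsmul, star_mul, map_star, star_star]; rfl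
  cov_rsmul m a := by rw [h.map_rsmul, r.cov_lsmul, star_mul, map_star, star_star]; rfl
  cov_innerL m n := by rw [star_star, r.cov_innerR, h.map_innerL]; rfl
  cov_innerR m n := by rw [star_star, r.cov_innerL, h.map_innerR]; rfl

theorem IsCrossedProduct.anticomap [CompleteSpace B] {r : CovariantRep S B}
    (hB : IsCrossedProduct.{_, _, _, w} S B r) (h : IsAntiIsoOver S T σ Φ) :
    IsCrossedProduct.{_, _, _, w} T B (r.anticomap h) := by
  refine ⟨fun D hD hρ hψ => hB.1 D hD ?_ ?_, fun C _ _ _ _ _ _ t => ?_⟩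
  · exact (σ.surjective.range_comp r.ρ).symm.trans_subset hρ
  · rintro _ ⟨m, rfl⟩
    have := star_mem (hψ ⟨Φ.symm m, rfl⟩)
    simpa [CovariantRep.anticomap] using this
  · refine (existsUnique_congr fun φ => and_congr ?_ ?_).1 (hB.2 C (t.anticomap h.symm))
    · exact (EquivLike.surjective σ).forall.trans (by simp [CovariantRep.anticomap])
    · refine Φ.surjective.forall.trans (forall_congr' fun m => ?_)
      simpa [CovariantRep.anticomap, map_star] using eq_star_iff_eq_star.trans eq_comm

end AntiIso

end Transfer

end CrossedProduct

section MatrixAction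

variable {G H : Type*} [AddCommGroup G] [AddCommGroup H]

/-- The action of an integral `2 × 2` matrix on pairs of elements of an abelian group, thought of as
column vectors. -/
def matrixAct (g : Matrix (Fin 2) (Fin 2) ℤ) : G × G →+ G × G where
  toFun v := (g 0 0 • v.1 + g 0 1 • v.2, g 1 0 • v.1 + g 1 1 • v.2)
  map_zero' := by simp
  map_add' v w := by
    ext <;> dsimp only [Prod.fst_add, Prod.snd_add] <;> module

theorem matrixAct_one (v : G × G) : matrixAct 1 v = v := by simp [matrixAct]

theorem matrixAct_mul (g h : Matrix (Fin 2) (Fin 2) ℤ) (v : G × G) :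
    matrixAct (g * h) v = matrixAct g (matrixAct h v) := by
  simp only [matrixAct, AddMonoidHom.coe_mk, ZeroHom.coe_mk, Matrix.mul_apply, Fin.sum_univ_two]
  ext <;> module

variable [TopologicalSpace G] [IsTopologicalAddGroup G] [TopologicalSpace H]
  [IsTopologicalAddGroup H]

/-- The automorphism of `G × G` given by an element of `GL(2,ℤ)`; it is used for `G = ℤ`, `ℝ` and
`ℝ/ℤ`. -/
def glAct (g : GL (Fin 2) ℤ) : G × G ≃ₜ+ G × G where
  toFun := matrixAct g
  invFun := matrixAct (g⁻¹ : GL (Fin 2) ℤ)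
  left_inv v := by rw [← matrixAct_mul, Units.inv_mul, matrixAct_one]
  right_inv v := by rw [← matrixAct_mul, Units.mul_inv, matrixAct_one]
  map_add' := map_add _
  continuous_toFun := by dsimp only [matrixAct, AddMonoidHom.coe_mk, ZeroHom.coe_mk]; fun_prop
  continuous_invFun := by dsimp only [matrixAct, AddMonoidHom.coe_mk, ZeroHom.coe_mk]; fun_prop

theorem glAct_apply (g : GL (Fin 2) ℤ) (v : G × G) :
    glAct g v = (g.val 0 0 • v.1 + g.val 0 1 • v.2, g.val 1 0 • v.1 + g.val 1 1 • v.2) :=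
  rfl

theorem glAct_neg (g : GL (Fin 2) ℤ) (v : G × G) : glAct (-g) v = -glAct g v := by
  simp only [glAct_apply, Units.val_neg, Matrix.neg_apply, neg_smul, Prod.neg_mk, neg_add]

theorem glAct_prodMap (g : GL (Fin 2) ℤ) (f : G →+ H) (v : G × G) :
    glAct g (f.prodMap f v) = f.prodMap f (glAct g v) := by
  simp [glAct_apply]

end MatrixAction

/-- The inclusion of the lattice `ℤ²` into the plane. -/
def latticeVec : ℤ × ℤ →+ ℝ × ℝ := (Int.castAddHom ℝ).prodMap (Int.castAddHom ℝ)

/-- The covering map from the plane to the torus `T²`. -/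
def torusPt : ℝ × ℝ →+ UnitAddCircle × UnitAddCircle :=
  (QuotientAddGroup.mk' _).prodMap (QuotientAddGroup.mk' _)

theorem torusPt_surjective : Function.Surjective torusPt :=
  (QuotientAddGroup.mk'_surjective _).prodMap (QuotientAddGroup.mk'_surjective _)

section Lift

open scoped FourierTransform

variable {c c' : ℤ} {ν ν' : ℝ}

theorem fourierChar_intCast (n : ℤ) : 𝐞 (n : ℝ) = 1 := by
  rw [Real.fourierChar_apply', mul_comm, Circle.exp_int_mul_two_pi]

theorem eChar_coe (c : ℤ) (ν y : ℝ) : eChar c ν (y : UnitAddCircle) = 𝐞 (-(c * (y - ν))) := by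
  rw [eChar, ← AddCircle.coe_sub, AddCircle.toCircle_apply_mk, ← Circle.exp_zsmul,
    Real.fourierChar_apply']
  congr 2
  simp
  ring

/-- The quasiperiodicity of the lifts to the plane of the elements of `Xcv c ν`. -/
def IsQuasiperiodic (c : ℤ) (ν : ℝ) (F : ℝ × ℝ → ℂ) : Prop :=
  ∀ (n : ℤ × ℤ) (v : ℝ × ℝ), F (v + latticeVec n) = 𝐞 (-(c * n.1 * (v.2 - ν))) • F v

theorem isQuasiperiodic_star {F : ℝ × ℝ → ℂ} :
    IsQuasiperiodic (-c) ν (star F) ↔ IsQuasiperiodic c ν F := by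
  refine forall₂_congr fun n v => ?_
  rw [← star_inj (x := F _)]
  simp [Circle.smul_def, AddChar.map_neg_eq_inv]

namespace Xcv

/-- The pullback of an element of `Xcv c ν` to the plane. -/
def lift : Xcv c ν →ₗ[ℂ] C(ℝ × ℝ, ℂ) :=
  (ContinuousMap.compRightAlgHom ℂ ℂ
    ((ContinuousMap.id ℝ).prodMap ⟨_, AddCircle.continuous_mk' (1 : ℝ)⟩)).toLinearMap ∘ₗ
    (Xcv c ν).subtype

theorem lift_injective : Function.Injective (lift : Xcv c ν → C(ℝ × ℝ, ℂ)) := by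
  intro f g h
  ext ⟨x, y⟩
  obtain ⟨y, rfl⟩ := QuotientAddGroup.mk_surjective y
  exact congr($h (x, y))

theorem isQuasiperiodic_lift (f : Xcv c ν) : IsQuasiperiodic c ν (lift f) := by
  rintro ⟨m, k⟩ ⟨x, y⟩
  have untwisted_periodic : Function.Periodic
      (fun x : ℝ => 𝐞 (c * x * (y - ν)) • f.1 (x, (y : UnitAddCircle))) 1 := fun x => by
    simp only [f.2 x y, eChar_coe, Circle.smul_def, smul_eq_mul, ← mul_assoc, ← Circle.coe_mul,
      ← AddChar.map_add_eq_mul]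
    congr 3
    ring
  have h := untwisted_periodic.int_mul m x
  simp only [mul_one, ← eq_inv_smul_iff, smul_smul, ← AddChar.map_neg_eq_inv,
    ← AddChar.map_add_eq_mul] at h
  have coe_add_intCast : ((y + k : ℝ) : UnitAddCircle) = y := by simp
  change f.1 (x + m, ((y + k : ℝ) : UnitAddCircle)) = _ • f.1 (x, (y : UnitAddCircle))
  rw [coe_add_intCast, h]
  congr 2
  ring

theorem mem_range_lift {F : C(ℝ × ℝ, ℂ)} :
    F ∈ LinearMap.range (lift : Xcv c ν →ₗ[ℂ] _) ↔ IsQuasiperiodic c ν F := by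
  refine ⟨?_, fun hF => ?_⟩
  · rintro ⟨f, rfl⟩
    exact isQuasiperiodic_lift f
  have periodic_snd (x : ℝ) : Function.Periodic (fun y => F (x, y)) 1 := fun y => by
    simpa [latticeVec] using hF (0, 1) (x, y)
  let f : ℝ × UnitAddCircle → ℂ := fun v => (periodic_snd v.1).lift v.2
  have isOpenQuotientMap : IsOpenQuotientMap
      (Prod.map id fun y => y : ℝ × ℝ → ℝ × UnitAddCircle) :=
    IsOpenQuotientMap.id.prodMap QuotientAddGroup.isOpenQuotientMap_mk
  have hf : Continuous f := isOpenQuotientMap.isQuotientMap.continuous_iff.2 F.continuous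
  refine ⟨⟨⟨f, hf⟩, fun x y => ?_⟩, rfl⟩
  obtain ⟨y, rfl⟩ := QuotientAddGroup.mk_surjective y
  change F (x + 1, y) = eChar c ν y * F (x, y)
  simpa [latticeVec, eChar_coe, Circle.smul_def] using hF (1, 0) (x, y)

variable {σ : ℂ →+* ℂ} {σ' : ℂ →+* ℂ} [RingHomInvPair σ σ'] [RingHomInvPair σ' σ]

theorem exists_equiv {T : C(ℝ × ℝ, ℂ) ≃ₛₗ[σ] C(ℝ × ℝ, ℂ)}
    (hT : ∀ F, IsQuasiperiodic c ν (T F) ↔ IsQuasiperiodic c' ν' F) :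
    ∃ Φ : Xcv c' ν' ≃ₛₗ[σ] Xcv c ν, ∀ f, lift (Φ f) = T (lift f) := by
  have map_range : (LinearMap.range (lift : Xcv c' ν' →ₗ[ℂ] _)).map T.toLinearMap =
      LinearMap.range (lift : Xcv c ν →ₗ[ℂ] _) := by
    ext F
    obtain ⟨F, rfl⟩ := T.surjective F
    rw [mem_range_lift, hT, ← mem_range_lift]
    exact T.injective.mem_set_image
  let Φ := ((LinearEquiv.ofInjective lift lift_injective).trans
    (T.ofSubmodules _ _ map_range)).trans (LinearEquiv.ofInjective lift lift_injective).symm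
  refine ⟨Φ, fun f => ?_⟩
  exact congrArg Subtype.val ((LinearEquiv.ofInjective lift lift_injective).apply_symm_apply _)

end Xcv

section Pullback

/-- The affine automorphism `v ↦ g v + t` of the plane. -/
def affineHomeo (g : GL (Fin 2) ℤ) (t : ℝ × ℝ) : ℝ × ℝ ≃ₜ ℝ × ℝ :=
  (glAct g).toHomeomorph.trans (Homeomorph.addRight t)

theorem affineHomeo_apply (g : GL (Fin 2) ℤ) (t v : ℝ × ℝ) :
    affineHomeo g t v = glAct g v + t :=
  rfl

theorem affineHomeo_add_latticeVec (g : GL (Fin 2) ℤ) (t v : ℝ × ℝ) (n : ℤ × ℤ) :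
    affineHomeo g t (v + latticeVec n) = affineHomeo g t v + latticeVec (glAct g n) := by
  have glAct_latticeVec : glAct g (latticeVec n) = latticeVec (glAct g n) := glAct_prodMap _ _ _
  rw [affineHomeo_apply, affineHomeo_apply, map_add, glAct_latticeVec, add_right_comm]

/-- The exponent of the phase that turns the pullback along `affineHomeo g t` of a function with
`IsQuasiperiodic c ν'` into one with `IsQuasiperiodic (det g * c) ν`. In the symmetric gauge, where
the lattice vector `(m, n)` has multiplier `𝐞 (c (x n - y m) / 2)` at `(x, y)`, only the sign
`det g` distinguishes a multiplier from its pullback; the quadratic terms of the exponent change to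
that gauge and back, and the linear terms correct the parity of the multiplier and the offsets. -/
def gaugeExponent (c : ℤ) (ν ν' : ℝ) (g : GL (Fin 2) ℤ) (t v : ℝ × ℝ) : ℝ :=
  c / 2 * ((glAct g v).1 * (glAct g v).2 - g.val.det * v.1 * v.2 - g.val 0 0 * g.val 1 0 * v.1
    - g.val 0 1 * g.val 1 1 * v.2) + c * (t.2 - ν') * (glAct g v).1 + c * ν * g.val.det * v.1

@[fun_prop]
theorem continuous_gaugeExponent (c : ℤ) (ν ν' : ℝ) (g : GL (Fin 2) ℤ) (t : ℝ × ℝ) :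
    Continuous (gaugeExponent c ν ν' g t) := by
  have : Continuous (glAct g : ℝ × ℝ → ℝ × ℝ) := (glAct g).continuous
  unfold gaugeExponent
  fun_prop

theorem fourierChar_gaugeExponent_add (c : ℤ) (ν ν' : ℝ) (g : GL (Fin 2) ℤ) (t v : ℝ × ℝ)
    (n : ℤ × ℤ) :
    𝐞 (gaugeExponent c ν ν' g t (v + latticeVec n)) =
      𝐞 (-((g.val.det * c : ℤ) * n.1 * (v.2 - ν))) *
        𝐞 (c * (glAct g n).1 * ((affineHomeo g t v).2 - ν')) * 𝐞 (gaugeExponent c ν ν' g t v) := by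
  obtain ⟨a, ha⟩ := Int.even_mul_pred_self n.1
  obtain ⟨b, hb⟩ := Int.even_mul_pred_self n.2
  replace ha : (n.1 : ℝ) * (n.1 - 1) = a + a := by exact_mod_cast ha
  replace hb : (n.2 : ℝ) * (n.2 - 1) = b + b := by exact_mod_cast hb
  let defect : ℤ := c * (g.val 0 0 * g.val 1 0 * a + g.val 0 1 * g.val 1 1 * b
    + g.val 0 1 * g.val 1 0 * n.1 * n.2)
  rw [← AddChar.map_add_eq_mul, ← AddChar.map_add_eq_mul, ← mul_one (𝐞 (_ + _)),
    ← fourierChar_intCast defect, ← AddChar.map_add_eq_mul]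
  congr 1
  simp only [gaugeExponent, latticeVec, AddMonoidHom.coe_prodMap, Int.coe_castAddHom, glAct_apply,
    Prod.fst_add, Prod.map_fst, smul_add, zsmul_eq_mul, Prod.snd_add, Prod.map_snd,
    Matrix.det_fin_two, Int.cast_sub, Int.cast_mul, Int.cast_add,
    affineHomeo_apply, defect]
  linear_combination (c * g.val 0 0 * g.val 1 0 / 2 : ℝ) * ha +
    (c * g.val 0 1 * g.val 1 1 / 2 : ℝ) * hb

theorem isQuasiperiodic_gauge_comp_iff {c : ℤ} {ν ν' : ℝ} {g : GL (Fin 2) ℤ} {t : ℝ × ℝ}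
    {F : ℝ × ℝ → ℂ} :
    IsQuasiperiodic (g.val.det * c) ν
      (fun v => 𝐞 (gaugeExponent c ν ν' g t v) • F (affineHomeo g t v)) ↔
      IsQuasiperiodic c ν' F := by
  have pointwise (n : ℤ × ℤ) (v : ℝ × ℝ) :
      𝐞 (gaugeExponent c ν ν' g t (v + latticeVec n)) • F (affineHomeo g t (v + latticeVec n)) =
        𝐞 (-((g.val.det * c : ℤ) * n.1 * (v.2 - ν))) •
          𝐞 (gaugeExponent c ν ν' g t v) • F (affineHomeo g t v) ↔
      F (affineHomeo g t v + latticeVec (glAct g n)) =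
        𝐞 (-(c * (glAct g n).1 * ((affineHomeo g t v).2 - ν'))) • F (affineHomeo g t v) := by
    rw [fourierChar_gaugeExponent_add, affineHomeo_add_latticeVec,
      AddChar.map_neg_eq_inv 𝐞 (c * _ * _), mul_smul, mul_smul, smul_left_cancel_iff, smul_comm,
      smul_left_cancel_iff, eq_inv_smul_iff]
  have reparametrize : IsQuasiperiodic c ν' F ↔ ∀ n v,
      F (affineHomeo g t v + latticeVec (glAct g n)) =
        𝐞 (-(c * (glAct g n).1 * ((affineHomeo g t v).2 - ν'))) • F (affineHomeo g t v) :=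
    (glAct g).surjective.forall.trans <| forall_congr' fun n =>
      (affineHomeo g t).surjective.forall
  exact (forall₂_congr pointwise).trans reparametrize.symm

/-- The operator `F ↦ u • (F ∘ A)` on continuous functions. -/
def weightedComp {X Y : Type*} [TopologicalSpace X] [TopologicalSpace Y] (u : C(X, Circle))
    (A : X ≃ₜ Y) : C(Y, ℂ) ≃ₗ[ℂ] C(X, ℂ) where
  toFun F := ⟨fun x => u x • F (A x), by fun_prop⟩
  invFun F := ⟨fun y => (u (A.symm y))⁻¹ • F (A.symm y), by fun_prop⟩
  left_inv F := by ext; simp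
  right_inv F := by ext; simp
  map_add' F F' := by ext; simp
  map_smul' k F := by ext; simp [mul_smul_comm]

namespace Xcv

theorem exists_equiv_comp_affineHomeo (c : ℤ) (ν ν' : ℝ) (g : GL (Fin 2) ℤ) (t : ℝ × ℝ) :
    ∃ (u : ℝ × ℝ → Circle) (Φ : Xcv c ν' ≃ₗ[ℂ] Xcv (g.val.det * c) ν),
      ∀ f v, lift (Φ f) v = u v • lift f (affineHomeo g t v) := by
  let u : C(ℝ × ℝ, Circle) := ⟨fun v => 𝐞 (gaugeExponent c ν ν' g t v), by fun_prop⟩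
  obtain ⟨Φ, hΦ⟩ := exists_equiv (T := weightedComp u (affineHomeo g t))
    fun F => isQuasiperiodic_gauge_comp_iff
  exact ⟨u, Φ, fun f v => DFunLike.congr_fun (hΦ f) v⟩

theorem exists_equiv_star_comp_affineHomeo (c : ℤ) (ν ν' : ℝ) (g : GL (Fin 2) ℤ) (t : ℝ × ℝ) :
    ∃ (u : ℝ × ℝ → Circle) (Φ : Xcv c ν' ≃ₗ⋆[ℂ] Xcv (g.val.det * -c) ν),
      ∀ f v, lift (Φ f) v = u v • star (lift f (affineHomeo g t v)) := by
  let u : C(ℝ × ℝ, Circle) := ⟨fun v => 𝐞 (gaugeExponent (-c) ν ν' g t v), by fun_prop⟩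
  obtain ⟨Φ, hΦ⟩ := exists_equiv
    (T := (starLinearEquiv ℂ).trans (weightedComp u (affineHomeo g t)))
    fun F => isQuasiperiodic_gauge_comp_iff.trans isQuasiperiodic_star
  exact ⟨u, Φ, fun f v => DFunLike.congr_fun (hΦ f) v⟩

end Xcv

end Pullback

end Lift

section Heisenberg

open Xcv (lift lift_injective)

variable {c c' : ℤ} {μ ν μ' ν' : ℝ} {S : CstarBimodule CT2 (Xcv c ν)}
  {S' : CstarBimodule CT2 (Xcv c' ν')}

namespace IsHeisenbergBimodule

theorem lift_lsmul (hS : IsHeisenbergBimodule c μ ν S) (a : CT2) (f : Xcv c ν) (v : ℝ × ℝ) :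
    lift (S.lsmul a f) v = a (torusPt v) * lift f v :=
  hS.1 a f v.1 v.2

theorem lift_rsmul (hS : IsHeisenbergBimodule c μ ν S) (f : Xcv c ν) (a : CT2) (v : ℝ × ℝ) :
    lift (S.rsmul f a) v = lift f v * a (torusPt v + torusPt (2 * μ, 2 * ν)) :=
  hS.2.1 f a v.1 v.2

theorem innerL_torusPt (hS : IsHeisenbergBimodule c μ ν S) (f g : Xcv c ν) (v : ℝ × ℝ) :
    S.innerL f g (torusPt v) = lift f v * star (lift g v) :=
  hS.2.2.1 f g v.1 v.2

theorem innerR_torusPt_add (hS : IsHeisenbergBimodule c μ ν S) (f g : Xcv c ν) (v : ℝ × ℝ) :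
    S.innerR f g (torusPt v + torusPt (2 * μ, 2 * ν)) = star (lift f v) * lift g v :=
  hS.2.2.2 f g v.1 v.2

end IsHeisenbergBimodule

theorem eq_of_forall_torusPt {a b : CT2} (h : ∀ v, a (torusPt v) = b (torusPt v)) : a = b :=
  ContinuousMap.ext (torusPt_surjective.forall.2 h)

theorem eq_of_forall_torusPt_add {a b : CT2} (τ : UnitAddCircle × UnitAddCircle)
    (h : ∀ v, a (torusPt v + τ) = b (torusPt v + τ)) : a = b :=
  ContinuousMap.ext (((add_right_surjective τ).comp torusPt_surjective).forall.2 h)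

theorem smul_mul_star_smul (u : Circle) (z w : ℂ) : u • z * star (u • w) = z * star w := by
  rw [Circle.smul_def, Circle.smul_def, smul_eq_mul, smul_eq_mul, star_mul', mul_mul_mul_comm,
    ← starRingEnd_apply (u : ℂ), ← Circle.coe_inv_eq_conj, ← Circle.coe_mul, mul_inv_cancel,
    Circle.coe_one, one_mul]

theorem star_smul_mul_smul (u : Circle) (z w : ℂ) : star (u • z) * u • w = star z * w := by
  rw [mul_comm, smul_mul_star_smul, mul_comm]

variable {θ : UnitAddCircle × UnitAddCircle ≃ₜ UnitAddCircle × UnitAddCircle}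
  {A : ℝ × ℝ → ℝ × ℝ} {u : ℝ × ℝ → Circle}

theorem compStarAlgEquiv'_apply_apply (a : CT2) (p : UnitAddCircle × UnitAddCircle) :
    θ.compStarAlgEquiv' ℂ ℂ a p = a (θ p) :=
  rfl

theorem isIsoOver_of_lift (hS : IsHeisenbergBimodule c μ ν S)
    (hS' : IsHeisenbergBimodule c' μ' ν' S') {Φ : Xcv c' ν' ≃ₗ[ℂ] Xcv c ν}
    (hΦ : ∀ f v, lift (Φ f) v = u v • lift f (A v))
    (hθ : ∀ v, θ (torusPt v) = torusPt (A v))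
    (hτ : ∀ v, θ (torusPt v + torusPt (2 * μ, 2 * ν)) = torusPt (A v) + torusPt (2 * μ', 2 * ν')) :
    IsIsoOver S S' (θ.compStarAlgEquiv' ℂ ℂ) Φ where
  map_lsmul a f := lift_injective <| ContinuousMap.ext fun v => by
    rw [hΦ, hS.lift_lsmul, hS'.lift_lsmul, hΦ, compStarAlgEquiv'_apply_apply, hθ, mul_smul_comm]
  map_rsmul f a := lift_injective <| ContinuousMap.ext fun v => by
    rw [hΦ, hS.lift_rsmul, hS'.lift_rsmul, hΦ, compStarAlgEquiv'_apply_apply, hτ, smul_mul_assoc]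
  map_innerL f f' := eq_of_forall_torusPt fun v => by
    rw [hS.innerL_torusPt, compStarAlgEquiv'_apply_apply, hθ, hS'.innerL_torusPt, hΦ, hΦ,
      smul_mul_star_smul]
  map_innerR f f' := eq_of_forall_torusPt_add (torusPt (2 * μ, 2 * ν)) fun v => by
    rw [hS.innerR_torusPt_add, compStarAlgEquiv'_apply_apply, hτ, hS'.innerR_torusPt_add, hΦ, hΦ,
      star_smul_mul_smul]

theorem isAntiIsoOver_of_lift (hS : IsHeisenbergBimodule c μ ν S)
    (hS' : IsHeisenbergBimodule c' μ' ν' S') {Φ : Xcv c' ν' ≃ₗ⋆[ℂ] Xcv c ν}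
    (hΦ : ∀ f v, lift (Φ f) v = u v • star (lift f (A v)))
    (hθ : ∀ v, θ (torusPt v) = torusPt (A v) + torusPt (2 * μ', 2 * ν'))
    (hτ : ∀ v, θ (torusPt v + torusPt (2 * μ, 2 * ν)) = torusPt (A v)) :
    IsAntiIsoOver S S' (θ.compStarAlgEquiv' ℂ ℂ) Φ where
  map_lsmul a f := lift_injective <| ContinuousMap.ext fun v => by
    rw [hΦ, hS.lift_rsmul, hS'.lift_lsmul, hΦ, ContinuousMap.star_apply,
      compStarAlgEquiv'_apply_apply, hτ, star_mul, smul_mul_assoc]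
  map_rsmul f a := lift_injective <| ContinuousMap.ext fun v => by
    rw [hΦ, hS.lift_lsmul, hS'.lift_rsmul, hΦ, ContinuousMap.star_apply,
      compStarAlgEquiv'_apply_apply, hθ, star_mul, mul_smul_comm]
  map_innerL f f' := eq_of_forall_torusPt_add (torusPt (2 * μ, 2 * ν)) fun v => by
    rw [hS.innerR_torusPt_add, compStarAlgEquiv'_apply_apply, hτ, hS'.innerL_torusPt, hΦ, hΦ,
      star_smul_mul_smul, star_star]
  map_innerR f f' := eq_of_forall_torusPt fun v => by
    rw [hS.innerL_torusPt, compStarAlgEquiv'_apply_apply, hθ, hS'.innerR_torusPt_add, hΦ, hΦ,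
      smul_mul_star_smul, star_star]

theorem torusPt_glAct (g : GL (Fin 2) ℤ) (v : ℝ × ℝ) : torusPt (glAct g v) = glAct g (torusPt v) :=
  (glAct_prodMap _ _ _).symm

theorem torusPt_two_mul (x y : ℝ) : torusPt (2 * x, 2 * y) = (2 : ℤ) • torusPt (x, y) := by
  rw [← map_zsmul]
  simp

variable {g : GL (Fin 2) ℤ}

theorem exists_isIsoOver (hS : IsHeisenbergBimodule c μ ν S)
    (hS' : IsHeisenbergBimodule c' μ' ν' S') (hg : glAct g (torusPt (μ, ν)) = torusPt (μ', ν'))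
    (hc : c = g.val.det * c') :
    ∃ (σ : CT2 ≃⋆ₐ[ℂ] CT2) (Φ : Xcv c' ν' ≃ₗ[ℂ] Xcv c ν), IsIsoOver S S' σ Φ := by
  subst hc
  obtain ⟨u, Φ, hΦ⟩ := Xcv.exists_equiv_comp_affineHomeo c' ν ν' g 0
  have act_torusPt (v : ℝ × ℝ) : glAct g (torusPt v) = torusPt (affineHomeo g 0 v) := by
    rw [affineHomeo_apply, add_zero, torusPt_glAct]
  refine ⟨_, Φ, isIsoOver_of_lift (θ := (glAct g).toHomeomorph) hS hS' hΦ act_torusPt fun v => ?_⟩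
  change glAct g _ = _
  rw [map_add, act_torusPt, torusPt_two_mul, map_zsmul, hg, ← torusPt_two_mul]

theorem exists_isAntiIsoOver (hS : IsHeisenbergBimodule c μ ν S)
    (hS' : IsHeisenbergBimodule c' μ' ν' S') (hg : glAct g (torusPt (μ, ν)) = torusPt (μ', ν'))
    (hc : c = -(g.val.det * c')) :
    ∃ (σ : CT2 ≃⋆ₐ[ℂ] CT2) (Φ : Xcv c' ν' ≃ₗ⋆[ℂ] Xcv c ν), IsAntiIsoOver S S' σ Φ := by
  -- Passing to the dual bimodule inverts the translation, so it is `-g` that intertwines them.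
  obtain rfl : c = (-g).val.det * -c' := by simp [hc, Matrix.det_neg]
  obtain ⟨u, Φ, hΦ⟩ := Xcv.exists_equiv_star_comp_affineHomeo c' ν ν' (-g) (-(2 * μ', 2 * ν'))
  have act_torusPt (v : ℝ × ℝ) : glAct (-g) (torusPt v) =
      torusPt (affineHomeo (-g) (-(2 * μ', 2 * ν')) v) + torusPt (2 * μ', 2 * ν') := by
    rw [← map_add, affineHomeo_apply, neg_add_cancel_right, torusPt_glAct]
  refine ⟨_, Φ,
    isAntiIsoOver_of_lift (θ := (glAct (-g)).toHomeomorph) hS hS' hΦ act_torusPt fun v => ?_⟩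
  change glAct (-g) _ = _
  rw [map_add, act_torusPt, torusPt_two_mul μ, map_zsmul, glAct_neg g, hg, smul_neg,
    ← torusPt_two_mul, add_neg_cancel_right]

end Heisenberg

theorem quantum_heisenberg_iso_general
    (c c' : ℤ) (hc : |c| = |c'|) (μ ν μ' ν' : ℝ)
    (g : Matrix (Fin 2) (Fin 2) ℤ) (hg : IsUnit g.det)
    (horb₁ : (((g 0 0 : ℝ) * μ + (g 0 1 : ℝ) * ν : ℝ) : UnitAddCircle) =
      ((μ' : ℝ) : UnitAddCircle))
    (horb₂ : (((g 1 0 : ℝ) * μ + (g 1 1 : ℝ) * ν : ℝ) : UnitAddCircle) =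
      ((ν' : ℝ) : UnitAddCircle))
    (S : CstarBimodule CT2 (Xcv c ν)) (hS : IsHeisenbergBimodule c μ ν S)
    (S' : CstarBimodule CT2 (Xcv c' ν')) (hS' : IsHeisenbergBimodule c' μ' ν' S')
    (B : Type*) [NormedRing B] [StarRing B] [CStarRing B] [NormedAlgebra ℂ B]
    [StarModule ℂ B] [CompleteSpace B]
    (r : CovariantRep S B) (hB : IsCrossedProduct S B r)
    (B' : Type*) [NormedRing B'] [StarRing B'] [CStarRing B'] [NormedAlgebra ℂ B']
    [StarModule ℂ B'] [CompleteSpace B']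
    (r' : CovariantRep S' B') (hB' : IsCrossedProduct S' B' r') :
    Nonempty (B ≃⋆ₐ[ℂ] B') := by
  obtain ⟨g, rfl⟩ := (Matrix.isUnit_iff_isUnit_det g).2 hg
  have horb : glAct g (torusPt (μ, ν)) = torusPt (μ', ν') := by
    rw [← torusPt_glAct, glAct_apply]
    simp only [zsmul_eq_mul]
    exact Prod.ext horb₁ horb₂
  have hdet : c = g.val.det * c' ∨ c = -(g.val.det * c') := by
    rwa [← abs_eq_abs, abs_mul, Int.isUnit_iff_abs_eq.1 hg, one_mul]
  rcases hdet with h | h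
  · obtain ⟨σ, Φ, iso⟩ := exists_isIsoOver hS hS' horb h
    exact (hB.comap iso).nonempty_starAlgEquiv hB'
  · obtain ⟨σ, Φ, antiIso⟩ := exists_isAntiIsoOver hS hS' horb h
    exact (hB.anticomap antiIso).nonempty_starAlgEquiv hB'

/-- Theorem 2.1 (`qhmiso`): if `(μ,ν)` and `(μ',ν')` lie in the same orbit of
the natural `GL(2,ℤ)`-action on the torus `T² = ℝ²/ℤ²`, then the quantum
Heisenberg manifolds `D^c_{μν}` and `D^c_{μ'ν'}` — realized as the crossed
products of `C(T²)` by the bimodules `(X^c_ν)_{α_{μν}}` and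
`(X^c_{ν'})_{α_{μ'ν'}}` — are isomorphic C*-algebras. -/
theorem quantum_heisenberg_iso
    (c : ℤ) (hc : 0 < c) (μ ν μ' ν' : ℝ)
    (g : Matrix (Fin 2) (Fin 2) ℤ) (hg : IsUnit g.det)
    (horb₁ : (((g 0 0 : ℝ) * μ + (g 0 1 : ℝ) * ν : ℝ) : UnitAddCircle) =
      ((μ' : ℝ) : UnitAddCircle))
    (horb₂ : (((g 1 0 : ℝ) * μ + (g 1 1 : ℝ) * ν : ℝ) : UnitAddCircle) =
      ((ν' : ℝ) : UnitAddCircle))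
    (S : CstarBimodule CT2 (Xcv c ν)) (hS : IsHeisenbergBimodule c μ ν S)
    (S' : CstarBimodule CT2 (Xcv c ν')) (hS' : IsHeisenbergBimodule c μ' ν' S')
    (B : Type*) [NormedRing B] [StarRing B] [CStarRing B] [NormedAlgebra ℂ B]
    [StarModule ℂ B] [CompleteSpace B]
    (r : CovariantRep S B) (hB : IsCrossedProduct S B r)
    (B' : Type*) [NormedRing B'] [StarRing B'] [CStarRing B'] [NormedAlgebra ℂ B']
    [StarModule ℂ B'] [CompleteSpace B']
    (r' : CovariantRep S' B') (hB' : IsCrossedProduct S' B' r') :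
    Nonempty (B ≃⋆ₐ[ℂ] B') :=
  quantum_heisenberg_iso_general c c rfl μ ν μ' ν' g hg horb₁ horb₂ S hS S' hS' B r hB B' r' hB'
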